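/- Let ψ ∈ L²(ℝ³; ℝ) with ‖ψ‖_{L²} = 1, define φ(z) := ∫_{ℝ³} ψ(y)² / (2π² |z−y|²) dy and V^φ(x) := −∫_{ℝ³} φ(y) / (π² |x−y|²) dy (an iterated integral of nonnegative functions, so V^φ(x) ∈ [−∞,0] is well defined). Then there is a constant C > 0 such that for every u ∈ H¹(ℝ³;ℂ): (i) ∫_{ℝ³} V^φ(x)² |u(x)|² dx ≤ C (‖∇u‖²_{L²} + ‖u‖²_{L²}), and (ii) | ∫_{ℝ³} V^φ(x) |u(x)|² dx | ≤ (1/2) ‖∇u‖²_{L²} + C ‖u‖²_{L²}. -/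

import Mathlib

open MeasureTheory Real
open scoped ENNReal NNReal

noncomputable section

/-!
The composition of the Riesz kernels `|x - y|⁻²` and `|y - w|⁻²` on `ℝ³` is bounded by a multiple of
`|x - w|⁻¹`, so `W x ≤ A ∫ |x - w|⁻¹ dμ(w)` with `μ = ψ²`, and by Cauchy–Schwarz
`W² ≤ A² μ(ℝ³) ∫ |x - w|⁻² dμ(w)`. Hardy's inequality centred at each `w` then bounds `∫ W² |u|²` by
`‖∇u‖²`, which is (i), and (ii) follows from `W ≤ c W² + c⁻¹`.

Hardy's inequality comes from integrating `0 ≤ |∂ᵢv + gᵢ v|²` by parts, with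
`g x = κ (x - a) / (|x - a|² + δ)`, `κ = (d - 2) / 2`, and letting `δ → 0`; mollification extends it
to weak derivatives.
-/

section LebesgueIntegral

open Filter Topology

variable {α : Type*} {mα : MeasurableSpace α} {μ : Measure α}

lemma sq_lintegral_le_measure_univ_mul {f : α → ℝ≥0∞} (hf : AEMeasurable f μ) :
    (∫⁻ x, f x ∂μ) ^ 2 ≤ μ Set.univ * ∫⁻ x, f x ^ 2 ∂μ := by
  have hölder := ENNReal.lintegral_mul_le_Lp_mul_Lq μ HolderConjugate.two_two
    (f := fun _ ↦ 1) aemeasurable_const hf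
  have sq_rpow_half (a : ℝ≥0∞) : (a ^ (1 / 2 : ℝ)) ^ 2 = a := by
    rw [← ENNReal.rpow_two, ← ENNReal.rpow_mul, one_div_mul_cancel two_ne_zero, ENNReal.rpow_one]
  simpa only [Pi.mul_apply, one_mul, ENNReal.rpow_two, mul_pow, sq_rpow_half, one_pow,
    lintegral_one] using pow_le_pow_left' hölder 2

lemma sq_lintegral_mul_le {ρ f : α → ℝ≥0∞} (hρ : AEMeasurable ρ μ) (hf : AEMeasurable f μ) :
    (∫⁻ x, ρ x * f x ∂μ) ^ 2 ≤ (∫⁻ x, ρ x ∂μ) * ∫⁻ x, ρ x * f x ^ 2 ∂μ := by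
  have jensen := sq_lintegral_le_measure_univ_mul
    (hf.mono_ac (withDensity_absolutelyContinuous μ ρ))
  rwa [lintegral_withDensity_eq_lintegral_mul₀ hρ hf,
    lintegral_withDensity_eq_lintegral_mul₀ hρ (hf.pow_const 2), withDensity_apply _ .univ,
    Measure.restrict_univ] at jensen

lemma lintegral_le_of_ae_tendsto {f : ℕ → α → ℝ≥0∞} {g : α → ℝ≥0∞} {C : ℝ≥0∞}
    (hf : ∀ n, AEMeasurable (f n) μ) (hlim : ∀ᵐ x ∂μ, Tendsto (f · x) atTop (𝓝 (g x)))
    (hC : ∀ n, ∫⁻ x, f n x ∂μ ≤ C) : ∫⁻ x, g x ∂μ ≤ C :=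
  calc ∫⁻ x, g x ∂μ
      = ∫⁻ x, liminf (f · x) atTop ∂μ :=
        lintegral_congr_ae (hlim.mono fun _ hx ↦ hx.liminf_eq.symm)
    _ ≤ liminf (fun n ↦ ∫⁻ x, f n x ∂μ) atTop := lintegral_liminf_le' hf
    _ ≤ C := (liminf_le_liminf (.of_forall hC)).trans (liminf_const C).le

lemma lintegral_mul_le_mul_lintegral_sq_mul_add {f : α → ℝ≥0∞} (hf : AEMeasurable f μ)
    (w : α → ℝ≥0∞) (c : ℝ≥0) :
    ∫⁻ x, w x * f x ∂μ ≤ c * ∫⁻ x, w x ^ 2 * f x ∂μ + (c : ℝ≥0∞)⁻¹ * ∫⁻ x, f x ∂μ := by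
  have pointwise (a : ℝ≥0∞) : a ≤ c * a ^ 2 + (c : ℝ≥0∞)⁻¹ := by
    rcases eq_or_ne c 0 with rfl | hc
    · simp
    rcases le_total a (c : ℝ≥0∞)⁻¹ with ha | ha
    · exact le_add_left ha
    · refine le_add_right ?_
      calc a = c * (c : ℝ≥0∞)⁻¹ * a := by
            rw [ENNReal.mul_inv_cancel (by simpa) ENNReal.coe_ne_top, one_mul]
        _ ≤ c * a * a := by gcongr
        _ = c * a ^ 2 := by ring
  calc ∫⁻ x, w x * f x ∂μ
      ≤ ∫⁻ x, c * (w x ^ 2 * f x) + (c : ℝ≥0∞)⁻¹ * f x ∂μ := by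
        refine lintegral_mono fun x ↦ (mul_le_mul_left (pointwise (w x)) (f x)).trans_eq ?_
        ring
    _ = c * ∫⁻ x, w x ^ 2 * f x ∂μ + (c : ℝ≥0∞)⁻¹ * ∫⁻ x, f x ∂μ := by
        rw [lintegral_add_right' _ (by fun_prop), lintegral_const_mul' _ _ ENNReal.coe_ne_top,
          lintegral_const_mul'' _ hf]

lemma ofReal_integral_norm_sq {F : Type*} [NormedAddCommGroup F] {f : α → F} (hf : MemLp f 2 μ) :
    ENNReal.ofReal (∫ x, ‖f x‖ ^ 2 ∂μ) = ∫⁻ x, ‖f x‖ₑ ^ 2 ∂μ := by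
  simpa only [norm_pow, norm_norm, enorm_pow, enorm_norm] using
    ofReal_integral_norm_eq_lintegral_enorm (hf.integrable_norm_pow two_ne_zero)

lemma memLp_two_iff_lintegral_enorm_sq_ne_top {F : Type*} [NormedAddCommGroup F] {f : α → F}
    (hf : AEStronglyMeasurable f μ) : MemLp f 2 μ ↔ ∫⁻ x, ‖f x‖ₑ ^ 2 ∂μ ≠ ∞ := by
  simp only [MemLp, hf, true_and, ← lt_top_iff_ne_top,
    eLpNorm_lt_top_iff_lintegral_rpow_enorm_lt_top two_ne_zero ENNReal.ofNat_ne_top,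
    ENNReal.toReal_ofNat, ENNReal.rpow_two]

end LebesgueIntegral

section RieszPotential

open Module

variable {E : Type*} [NormedAddCommGroup E] [MeasurableSpace E]

/-- The (unnormalised) Riesz potential `∫ |x - y|⁻ˢ dμ(y)` of a measure, with values in `[0, ∞]`. -/
def rieszPotential (s : ℕ) (μ : Measure E) (x : E) : ℝ≥0∞ := ∫⁻ y, (‖x - y‖ₑ ^ s)⁻¹ ∂μ

lemma sq_rieszPotential_le [BorelSpace E] (s : ℕ) (μ : Measure E) (x : E) :
    rieszPotential s μ x ^ 2 ≤ μ Set.univ * rieszPotential (s * 2) μ x := by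
  refine (sq_lintegral_le_measure_univ_mul (by fun_prop)).trans_eq ?_
  simp only [rieszPotential, ENNReal.inv_pow, pow_mul]

lemma inv_pow_mul_inv_pow_le (α β : ℕ) {p q d : ℝ≥0∞} (hd : d ≤ p + q) :
    (p ^ α)⁻¹ * (q ^ β)⁻¹ ≤ 3 ^ β * ((p ^ α)⁻¹ * ((p + d) ^ β)⁻¹) +
      3 ^ α * ((q ^ β)⁻¹ * ((q + d) ^ α)⁻¹) := by
  have inv_pow_le (k : ℕ) {r s : ℝ≥0∞} (hrs : r ≤ s) (hdrs : d ≤ r + s) :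
      (s ^ k)⁻¹ ≤ 3 ^ k * ((r + d) ^ k)⁻¹ := by
    have : r + d ≤ 3 * s := calc
      r + d ≤ s + (s + s) := by gcongr; exact hdrs.trans (by gcongr)
      _ = 3 * s := by ring
    rw [ENNReal.inv_pow, ENNReal.inv_pow, ← mul_pow]
    gcongr
    rw [← ENNReal.inv_le_inv, inv_inv, ENNReal.mul_inv (by simp) (by simp), inv_inv, mul_comm,
      ← div_eq_mul_inv]
    exact ENNReal.div_le_of_le_mul' this
  rcases le_total p q with hpq | hqp
  · refine le_add_right ?_
    rw [mul_left_comm]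
    gcongr
    exact inv_pow_le β hpq hd
  · refine le_add_left ?_
    rw [mul_left_comm, mul_comm]
    gcongr
    exact inv_pow_le α hqp (by rwa [add_comm])

variable [NormedSpace ℝ E] [FiniteDimensional ℝ E] [BorelSpace E] (ν : Measure E)
  [ν.IsAddHaarMeasure]

lemma measurable_rieszPotential (s : ℕ) (μ : Measure E) [SFinite μ] :
    Measurable (rieszPotential s μ) :=
  Measurable.lintegral_prod_right' (f := fun p : E × E ↦ (‖p.1 - p.2‖ₑ ^ s)⁻¹) (by fun_prop)

lemma lintegral_inv_enorm_pow_mul_ne_top {α β : ℕ} (hα : α < finrank ℝ E)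
    (hαβ : finrank ℝ E < α + β) :
    ∫⁻ t, (‖t‖ₑ ^ α)⁻¹ * ((‖t‖ₑ + 1) ^ β)⁻¹ ∂ν ≠ ∞ := by
  have : Nontrivial E := Module.nontrivial_of_finrank_pos (R := ℝ) (by lia)
  have radial : Integrable (fun t : E ↦ (‖t‖ ^ α)⁻¹ * ((‖t‖ + 1) ^ β)⁻¹) ν := by
    rw [integrable_fun_norm_addHaar ν (f := fun r ↦ (r ^ α)⁻¹ * ((r + 1) ^ β)⁻¹)]
    refine integrable_inv_one_add_sq.integrableOn.mono' (by fun_prop) ?_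
    filter_upwards [self_mem_ae_restrict measurableSet_Ioi] with r (hr : 0 < r)
    obtain ⟨k, hk⟩ : ∃ k, finrank ℝ E - 1 = α + k := ⟨finrank ℝ E - 1 - α, by lia⟩
    obtain ⟨l, rfl⟩ : ∃ l, β = k + 2 + l := ⟨β - (k + 2), by lia⟩
    have hrk : r ^ k ≤ (r + 1) ^ k := by gcongr; linarith
    calc ‖r ^ (finrank ℝ E - 1) • ((r ^ α)⁻¹ * ((r + 1) ^ (k + 2 + l))⁻¹)‖
        = r ^ k * ((r + 1) ^ (k + 2 + l))⁻¹ := by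
          rw [Real.norm_of_nonneg (by positivity), smul_eq_mul, hk, pow_add]
          field_simp
      _ ≤ (r + 1) ^ (k + l) * ((r + 1) ^ (k + 2 + l))⁻¹ := by
          gcongr
          exact hrk.trans (pow_le_pow_right₀ (by linarith) (by lia))
      _ = ((r + 1) ^ 2)⁻¹ := by field_simp; ring
      _ ≤ (1 + r ^ 2)⁻¹ := by gcongr; nlinarith
  convert! radial.lintegral_lt_top.ne using 1
  refine lintegral_congr_ae ?_
  filter_upwards [Measure.ae_ne ν 0] with t ht
  have : 0 < ‖t‖ := norm_pos_iff.2 ht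
  rw [ENNReal.ofReal_mul (by positivity), ENNReal.ofReal_inv_of_pos (by positivity),
    ENNReal.ofReal_inv_of_pos (by positivity), ENNReal.ofReal_pow (by positivity),
    ENNReal.ofReal_pow (by positivity), ENNReal.ofReal_add (by positivity) zero_le_one, ofReal_norm,
    ENNReal.ofReal_one]

lemma lintegral_eq_enorm_pow_mul_lintegral_comp_smul (f : E → ℝ≥0∞) {r : ℝ} (hr : r ≠ 0) :
    ∫⁻ x, f x ∂ν = ‖r‖ₑ ^ finrank ℝ E * ∫⁻ x, f (r • x) ∂ν := by
  have h0 : ‖r‖ₑ ^ finrank ℝ E ≠ 0 := pow_ne_zero _ (enorm_ne_zero.2 hr)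
  have := (Homeomorph.smulOfNeZero r hr).measurableEmbedding.lintegral_map (μ := ν) f
  simp only [Homeomorph.smulOfNeZero_apply] at this
  rw [← this, Measure.map_addHaar_smul ν hr, lintegral_smul_measure, smul_eq_mul, ← mul_assoc,
    ← Real.enorm_eq_ofReal_abs, enorm_inv (pow_ne_zero _ hr), enorm_pow,
    ENNReal.mul_inv_cancel h0 (by finiteness), one_mul]

lemma lintegral_inv_enorm_pow_mul_scale {α β γ : ℕ} (h : α + β = finrank ℝ E + γ) {r : ℝ}
    (hr : r ≠ 0) :
    ∫⁻ t, (‖t‖ₑ ^ α)⁻¹ * ((‖t‖ₑ + ‖r‖ₑ) ^ β)⁻¹ ∂ν =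
      (∫⁻ t, (‖t‖ₑ ^ α)⁻¹ * ((‖t‖ₑ + 1) ^ β)⁻¹ ∂ν) * (‖r‖ₑ ^ γ)⁻¹ := by
  have homogeneous (t : E) : (‖r • t‖ₑ ^ α)⁻¹ * ((‖r • t‖ₑ + ‖r‖ₑ) ^ β)⁻¹ =
      (‖r‖ₑ ^ (α + β))⁻¹ * ((‖t‖ₑ ^ α)⁻¹ * ((‖t‖ₑ + 1) ^ β)⁻¹) := by
    rw [show ‖r • t‖ₑ + ‖r‖ₑ = ‖r‖ₑ * (‖t‖ₑ + 1) by rw [enorm_smul]; ring, enorm_smul, mul_pow,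
      mul_pow, ENNReal.mul_inv (by simp [hr]) (by simp), ENNReal.mul_inv (by simp [hr]) (by simp),
      pow_add, ENNReal.mul_inv (by simp [hr]) (by simp)]
    ring
  rw [lintegral_eq_enorm_pow_mul_lintegral_comp_smul ν _ hr]
  simp_rw [homogeneous]
  rw [lintegral_const_mul _ (by fun_prop), h, pow_add, ENNReal.mul_inv (by simp [hr]) (by simp),
    ← mul_assoc, ← mul_assoc, ENNReal.mul_inv_cancel (by simp [hr]) (by finiteness), one_mul,
    mul_comm]

lemma exists_lintegral_inv_enorm_pow_mul_inv_enorm_pow_le {α β γ : ℕ} (hα : α < finrank ℝ E)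
    (hβ : β < finrank ℝ E) (h : α + β = finrank ℝ E + γ) (hγ : γ ≠ 0) :
    ∃ A : ℝ≥0, ∀ x w : E,
      ∫⁻ y, (‖x - y‖ₑ ^ α)⁻¹ * (‖y - w‖ₑ ^ β)⁻¹ ∂ν ≤ A * (‖x - w‖ₑ ^ γ)⁻¹ := by
  set I : ℕ → ℕ → ℝ≥0∞ := fun α β ↦ ∫⁻ t, (‖t‖ₑ ^ α)⁻¹ * ((‖t‖ₑ + 1) ^ β)⁻¹ ∂ν
  have hA : 3 ^ β * I α β + 3 ^ α * I β α + 1 ≠ ∞ := by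
    have := lintegral_inv_enorm_pow_mul_ne_top ν hα (β := β) (by lia)
    have := lintegral_inv_enorm_pow_mul_ne_top ν hβ (β := α) (by lia)
    finiteness
  refine ⟨(3 ^ β * I α β + 3 ^ α * I β α + 1).toNNReal, fun x w ↦ ?_⟩
  rw [ENNReal.coe_toNNReal hA]
  rcases eq_or_ne x w with rfl | hxw
  · simp [hγ]
  have triangle (y : E) : ‖x - w‖ₑ ≤ ‖x - y‖ₑ + ‖y - w‖ₑ := by
    simpa only [sub_add_sub_cancel] using enorm_add_le (x - y) (y - w)
  have hr : ‖x - w‖ ≠ 0 := norm_ne_zero_iff.2 (sub_ne_zero.2 hxw)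
  calc ∫⁻ y, (‖x - y‖ₑ ^ α)⁻¹ * (‖y - w‖ₑ ^ β)⁻¹ ∂ν
      ≤ ∫⁻ y, 3 ^ β * ((‖x - y‖ₑ ^ α)⁻¹ * ((‖x - y‖ₑ + ‖x - w‖ₑ) ^ β)⁻¹) +
          3 ^ α * ((‖y - w‖ₑ ^ β)⁻¹ * ((‖y - w‖ₑ + ‖x - w‖ₑ) ^ α)⁻¹) ∂ν :=
        lintegral_mono fun y ↦ inv_pow_mul_inv_pow_le α β (triangle y)
    _ = 3 ^ β * ∫⁻ t, (‖t‖ₑ ^ α)⁻¹ * ((‖t‖ₑ + ‖x - w‖ₑ) ^ β)⁻¹ ∂ν +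
          3 ^ α * ∫⁻ t, (‖t‖ₑ ^ β)⁻¹ * ((‖t‖ₑ + ‖x - w‖ₑ) ^ α)⁻¹ ∂ν := by
        rw [lintegral_add_left (by fun_prop), lintegral_const_mul _ (by fun_prop),
          lintegral_const_mul _ (by fun_prop),
          lintegral_sub_left_eq_self (fun t ↦ (‖t‖ₑ ^ α)⁻¹ * ((‖t‖ₑ + ‖x - w‖ₑ) ^ β)⁻¹),
          lintegral_sub_right_eq_self (fun t ↦ (‖t‖ₑ ^ β)⁻¹ * ((‖t‖ₑ + ‖x - w‖ₑ) ^ α)⁻¹)]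
    _ = (3 ^ β * I α β + 3 ^ α * I β α) * (‖x - w‖ₑ ^ γ)⁻¹ := by
        rw [← enorm_norm (x - w), lintegral_inv_enorm_pow_mul_scale ν h hr,
          lintegral_inv_enorm_pow_mul_scale ν ((add_comm β α).trans h) hr]
        ring
    _ ≤ (3 ^ β * I α β + 3 ^ α * I β α + 1) * (‖x - w‖ₑ ^ γ)⁻¹ := by
        gcongr ?_ * _
        exact le_self_add

lemma exists_rieszPotential_withDensity_rieszPotential_le {α β γ : ℕ} (hα : α < finrank ℝ E)
    (hβ : β < finrank ℝ E) (h : α + β = finrank ℝ E + γ) (hγ : γ ≠ 0) :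
    ∃ A : ℝ≥0, ∀ (μ : Measure E) [SFinite μ] (x : E),
      rieszPotential α (ν.withDensity (rieszPotential β μ)) x ≤ A * rieszPotential γ μ x := by
  obtain ⟨A, hA⟩ := exists_lintegral_inv_enorm_pow_mul_inv_enorm_pow_le ν hα hβ h hγ
  refine ⟨A, fun μ _ x ↦ ?_⟩
  calc rieszPotential α (ν.withDensity (rieszPotential β μ)) x
      = ∫⁻ y, rieszPotential β μ y * (‖x - y‖ₑ ^ α)⁻¹ ∂ν :=
        lintegral_withDensity_eq_lintegral_mul ν (measurable_rieszPotential β μ) (by fun_prop)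
    _ = ∫⁻ y, ∫⁻ w, (‖x - y‖ₑ ^ α)⁻¹ * (‖y - w‖ₑ ^ β)⁻¹ ∂μ ∂ν := by
        refine lintegral_congr fun y ↦ ?_
        rw [lintegral_const_mul _ (by fun_prop), mul_comm, rieszPotential]
    _ = ∫⁻ w, ∫⁻ y, (‖x - y‖ₑ ^ α)⁻¹ * (‖y - w‖ₑ ^ β)⁻¹ ∂ν ∂μ :=
        lintegral_lintegral_swap (by fun_prop)
    _ ≤ ∫⁻ w, A * (‖x - w‖ₑ ^ γ)⁻¹ ∂μ := lintegral_mono (hA x)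
    _ = A * rieszPotential γ μ x := lintegral_const_mul _ (by fun_prop)

lemma exists_sq_rieszPotential_withDensity_rieszPotential_le {α β γ : ℕ} (hα : α < finrank ℝ E)
    (hβ : β < finrank ℝ E) (h : α + β = finrank ℝ E + γ) (hγ : γ ≠ 0) :
    ∃ A : ℝ≥0, ∀ (μ : Measure E) [SFinite μ] (x : E),
      rieszPotential α (ν.withDensity (rieszPotential β μ)) x ^ 2 ≤
        A * μ Set.univ * rieszPotential (γ * 2) μ x := by
  obtain ⟨A, hA⟩ := exists_rieszPotential_withDensity_rieszPotential_le ν hα hβ h hγ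
  refine ⟨A ^ 2, fun μ _ x ↦ ?_⟩
  calc rieszPotential α (ν.withDensity (rieszPotential β μ)) x ^ 2
      ≤ (A * rieszPotential γ μ x) ^ 2 := by gcongr; exact hA μ x
    _ = A ^ 2 * rieszPotential γ μ x ^ 2 := mul_pow ..
    _ ≤ A ^ 2 * (μ Set.univ * rieszPotential (γ * 2) μ x) := by
        gcongr
        exact sq_rieszPotential_le γ μ x
    _ = ↑(A ^ 2) * μ Set.univ * rieszPotential (γ * 2) μ x := by
        rw [ENNReal.coe_pow, mul_assoc]

end RieszPotential

section WeakDerivative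

open Filter Topology
open scoped Convolution ContDiff

variable {E : Type*} [NormedAddCommGroup E] [MeasurableSpace E] [BorelSpace E]
  {F : Type*} [NormedAddCommGroup F] [NormedSpace ℝ F] {μ : Measure E}

lemma lintegral_enorm_convolution_sq_le [SecondCountableTopology E] [SFinite μ]
    [μ.IsAddLeftInvariant] {η : E → ℝ} (hη : AEStronglyMeasurable η μ) {f : E → F}
    (hf : AEStronglyMeasurable f μ) :
    ∫⁻ x, ‖(η ⋆[ContinuousLinearMap.lsmul ℝ ℝ, μ] f) x‖ₑ ^ 2 ∂μ ≤
      (∫⁻ x, ‖η x‖ₑ ∂μ) ^ 2 * ∫⁻ x, ‖f x‖ₑ ^ 2 ∂μ := by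
  have hf_sub (x : E) : AEMeasurable (fun t ↦ ‖f (x - t)‖ₑ) μ :=
    (hf.comp_quasiMeasurePreserving
      (quasiMeasurePreserving_sub_left_of_right_invariant μ x)).enorm
  have hprod : AEMeasurable (fun p : E × E ↦ ‖η p.2‖ₑ * ‖f (p.1 - p.2)‖ₑ ^ 2) (μ.prod μ) :=
    hη.enorm.comp_snd.mul ((hf.comp_quasiMeasurePreserving
      (quasiMeasurePreserving_sub_of_right_invariant μ μ)).enorm.pow_const 2)
  calc ∫⁻ x, ‖(η ⋆[ContinuousLinearMap.lsmul ℝ ℝ, μ] f) x‖ₑ ^ 2 ∂μ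
      ≤ ∫⁻ x, (∫⁻ t, ‖η t‖ₑ * ‖f (x - t)‖ₑ ∂μ) ^ 2 ∂μ := by
        gcongr with x
        refine (enorm_integral_le_lintegral_enorm _).trans_eq ?_
        simp only [ContinuousLinearMap.lsmul_apply, enorm_smul]
    _ ≤ ∫⁻ x, (∫⁻ t, ‖η t‖ₑ ∂μ) * ∫⁻ t, ‖η t‖ₑ * ‖f (x - t)‖ₑ ^ 2 ∂μ ∂μ := by
        gcongr with x
        exact sq_lintegral_mul_le hη.enorm (hf_sub x)
    _ = (∫⁻ t, ‖η t‖ₑ ∂μ) * ∫⁻ x, ∫⁻ t, ‖η t‖ₑ * ‖f (x - t)‖ₑ ^ 2 ∂μ ∂μ :=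
        lintegral_const_mul'' _ hprod.lintegral_prod_right'
    _ = (∫⁻ t, ‖η t‖ₑ ∂μ) * ∫⁻ t, ‖η t‖ₑ * ∫⁻ x, ‖f x‖ₑ ^ 2 ∂μ ∂μ := by
        rw [lintegral_lintegral_swap hprod]
        refine congr_arg _ (lintegral_congr fun t ↦ ?_)
        rw [lintegral_const_mul' _ _ enorm_ne_top,
          lintegral_sub_right_eq_self (fun x ↦ ‖f x‖ₑ ^ 2)]
    _ = (∫⁻ t, ‖η t‖ₑ ∂μ) ^ 2 * ∫⁻ x, ‖f x‖ₑ ^ 2 ∂μ := by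
        rw [lintegral_mul_const'' _ hη.enorm, sq, mul_assoc]

variable [NormedSpace ℝ E]

/-- `u'` is the weak (distributional) derivative of `u` in the direction `v`. Neither function is
required to be locally integrable: this is part of the hypotheses wherever it matters. -/
def HasWeakLineDeriv (μ : Measure E) (u u' : E → F) (v : E) : Prop :=
  ∀ φ : E → ℝ, ContDiff ℝ ∞ φ → HasCompactSupport φ →
    ∫ x, fderiv ℝ φ x v • u x ∂μ = -∫ x, φ x • u' x ∂μ

lemma HasWeakLineDeriv.fderiv_convolution [FiniteDimensional ℝ E] [μ.IsAddHaarMeasure]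
    {u u' : E → F} {v : E} (h : HasWeakLineDeriv μ u u' v) (hu : LocallyIntegrable u μ)
    {η : E → ℝ} (hη : ContDiff ℝ ∞ η) (hcη : HasCompactSupport η) (x : E) :
    fderiv ℝ (η ⋆[ContinuousLinearMap.lsmul ℝ ℝ, μ] u) x v =
      (η ⋆[ContinuousLinearMap.lsmul ℝ ℝ, μ] u') x := by
  have fderiv_reflect (y : E) : fderiv ℝ (fun y ↦ η (x - y)) y v = -fderiv ℝ η (x - y) v := by
    have hcomp : HasFDerivAt (fun y ↦ η (x - y)) (fderiv ℝ η (x - y) ∘L (-.id ℝ E)) y :=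
      ((hη.differentiable (by simp)) (x - y)).hasFDerivAt.comp y ((hasFDerivAt_id y).const_sub x)
    rw [hcomp.fderiv, ContinuousLinearMap.comp_apply, neg_apply, map_neg,
      ContinuousLinearMap.id_apply]
  have test := h (fun y ↦ η (x - y)) (by fun_prop)
    (hcη.comp_homeomorph (Homeomorph.subLeft x))
  simp only [fderiv_reflect, neg_smul, integral_neg, neg_inj] at test
  have hint := ((hcη.fderiv ℝ).convolutionExists_left
    (ContinuousLinearMap.precompL E (ContinuousLinearMap.lsmul ℝ ℝ : ℝ →L[ℝ] F →L[ℝ] F))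
    (hη.continuous_fderiv (by simp)) hu x).integrable_swap
  rw [(hcη.hasFDerivAt_convolution_left _ (hη.of_le (by simp)) hu x).fderiv,
    convolution_eq_swap, convolution_eq_swap, ContinuousLinearMap.integral_apply hint]
  simpa only [ContinuousLinearMap.precompL_apply, ContinuousLinearMap.lsmul_apply] using test

lemma exists_seq_convolution_tendsto [FiniteDimensional ℝ E] [CompleteSpace F]
    [μ.IsAddHaarMeasure] {u : E → F} (hu : LocallyIntegrable u μ) :
    ∃ η : ℕ → E → ℝ, (∀ n, ContDiff ℝ ∞ (η n)) ∧ (∀ n, HasCompactSupport (η n)) ∧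
      (∀ n, ∫⁻ x, ‖η n x‖ₑ ∂μ = 1) ∧
      ∀ᵐ x ∂μ, Tendsto (fun n ↦ (η n ⋆[ContinuousLinearMap.lsmul ℝ ℝ, μ] u) x) atTop
        (𝓝 (u x)) := by
  let ζ (n : ℕ) : ContDiffBump (0 : E) :=
    ⟨1 / (n + 1), 2 * (1 / (n + 1)), by positivity,
      lt_two_mul_self (by positivity)⟩
  refine ⟨fun n ↦ (ζ n).normed μ, fun n ↦ (ζ n).contDiff_normed,
    fun n ↦ (ζ n).hasCompactSupport_normed, fun n ↦ ?_, ?_⟩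
  · rw [← ofReal_integral_norm_eq_lintegral_enorm (ζ n).integrable_normed]
    simp only [Real.norm_of_nonneg ((ζ n).nonneg_normed _), (ζ n).integral_normed,
      ENNReal.ofReal_one]
  · refine ContDiffBump.ae_convolution_tendsto_right_of_locallyIntegrable (K := 2) ?_
      (.of_forall fun n ↦ le_rfl) hu
    simpa only [mul_zero] using (tendsto_one_div_add_atTop_nhds_zero_nat (𝕜 := ℝ)).const_mul 2

lemma exists_seq_contDiff_of_hasWeakLineDeriv [FiniteDimensional ℝ E] [CompleteSpace F]
    [μ.IsAddHaarMeasure] {ι : Type*} {u : E → F} {u' : ι → E → F} {v : ι → E}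
    (hu : MemLp u 2 μ) (hu' : ∀ i, MemLp (u' i) 2 μ)
    (h : ∀ i, HasWeakLineDeriv μ u (u' i) (v i)) :
    ∃ w : ℕ → E → F, (∀ n, ContDiff ℝ 1 (w n)) ∧ (∀ n, MemLp (w n) 2 μ) ∧
      (∀ n i, MemLp (fun x ↦ fderiv ℝ (w n) x (v i)) 2 μ) ∧
      (∀ n i, ∫⁻ x, ‖fderiv ℝ (w n) x (v i)‖ₑ ^ 2 ∂μ ≤ ∫⁻ x, ‖u' i x‖ₑ ^ 2 ∂μ) ∧
      ∀ᵐ x ∂μ, Tendsto (fun n ↦ w n x) atTop (𝓝 (u x)) := by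
  have hloc : LocallyIntegrable u μ := hu.locallyIntegrable one_le_two
  obtain ⟨η, hη, hcη, hη_one, hlim⟩ := exists_seq_convolution_tendsto hloc
  have young (n : ℕ) {f : E → F} (hf : MemLp f 2 μ) :
      ∫⁻ x, ‖(η n ⋆[ContinuousLinearMap.lsmul ℝ ℝ, μ] f) x‖ₑ ^ 2 ∂μ ≤ ∫⁻ x, ‖f x‖ₑ ^ 2 ∂μ := by
    simpa only [hη_one, one_pow, one_mul] using
      lintegral_enorm_convolution_sq_le (hη n).continuous.aestronglyMeasurable hf.1
  have memLp_convolution (n : ℕ) {f : E → F} (hf : MemLp f 2 μ) :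
      MemLp (η n ⋆[ContinuousLinearMap.lsmul ℝ ℝ, μ] f) 2 μ := by
    have hcont := (hcη n).continuous_convolution_left (ContinuousLinearMap.lsmul ℝ ℝ)
      (hη n).continuous (hf.locallyIntegrable one_le_two)
    have := (memLp_two_iff_lintegral_enorm_sq_ne_top hf.1).1 hf
    exact (memLp_two_iff_lintegral_enorm_sq_ne_top hcont.aestronglyMeasurable).2
      (ne_top_of_le_ne_top this (young n hf))
  refine ⟨fun n ↦ η n ⋆[ContinuousLinearMap.lsmul ℝ ℝ, μ] u, fun n ↦ ?_,
    fun n ↦ memLp_convolution n hu, fun n i ↦ ?_, fun n i ↦ ?_, hlim⟩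
  · exact (hcη n).contDiff_convolution_left _ ((hη n).of_le (by simp)) hloc
  · simpa only [(h i).fderiv_convolution hloc (hη n) (hcη n)] using memLp_convolution n (hu' i)
  · simpa only [(h i).fderiv_convolution hloc (hη n) (hcη n)] using young n (hu' i)

end WeakDerivative

section GroundState

open scoped InnerProductSpace

variable {E : Type*} [NormedAddCommGroup E] [NormedSpace ℝ E] {F : Type*} [NormedAddCommGroup F]
  [InnerProductSpace ℝ F] {v : E → F}

lemma fderiv_norm_sq_comp_apply {x : E} (hv : DifferentiableAt ℝ v x) (e : E) :
    fderiv ℝ (fun x ↦ ‖v x‖ ^ 2) x e = 2 * ⟪v x, fderiv ℝ v x e⟫_ℝ := by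
  simp [hv.hasFDerivAt.norm_sq.fderiv]

variable [MeasurableSpace E] [BorelSpace E] {μ : Measure E}

lemma integrable_fderiv_norm_sq_comp {e : E} (hv : ContDiff ℝ 1 v) (hv₂ : MemLp v 2 μ)
    (hdv₂ : MemLp (fun x ↦ fderiv ℝ v x e) 2 μ) :
    Integrable (fun x ↦ fderiv ℝ (fun x ↦ ‖v x‖ ^ 2) x e) μ := by
  have hdv : Continuous fun x ↦ fderiv ℝ v x e :=
    (hv.continuous_fderiv one_ne_zero).clm_apply continuous_const
  simp only [fderiv_norm_sq_comp_apply (hv.differentiable one_ne_zero _)]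
  exact (memLp_one_iff_integrable.1 (hv₂.of_bilin (fun a b ↦ ⟪a, b⟫_ℝ) 1 hdv₂
    (hv.continuous.inner hdv).aestronglyMeasurable
    (.of_forall fun x ↦ by simpa using nnnorm_inner_le_nnnorm _ _))).const_mul 2

lemma integral_norm_sq_mul_fderiv_sub_sq_le [FiniteDimensional ℝ E]
    [μ.IsAddHaarMeasure] {e : E} (hv : ContDiff ℝ 1 v) (hv₂ : MemLp v 2 μ)
    (hdv₂ : MemLp (fun x ↦ fderiv ℝ v x e) 2 μ) {g : E → ℝ}
    (hg : ContDiff ℝ 1 g) {A B : ℝ} (hA : ∀ x, ‖g x‖ ≤ A) (hB : ∀ x, ‖fderiv ℝ g x e‖ ≤ B) :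
    Integrable (fun x ↦ ‖v x‖ ^ 2 * (fderiv ℝ g x e - g x ^ 2)) μ ∧
      ∫ x, ‖v x‖ ^ 2 * (fderiv ℝ g x e - g x ^ 2) ∂μ ≤ ∫ x, ‖fderiv ℝ v x e‖ ^ 2 ∂μ := by
  have mul_g {f : E → ℝ} (hf : Integrable f μ) : Integrable (fun x ↦ f x * g x) μ :=
    hf.mul_bdd hg.continuous.aestronglyMeasurable (.of_forall hA)
  have hN := hv₂.integrable_norm_pow two_ne_zero
  have hdv := hdv₂.integrable_norm_pow two_ne_zero
  have hNg := mul_g hN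
  have hNgg := mul_g hNg
  have hdNg := mul_g (integrable_fderiv_norm_sq_comp hv hv₂ hdv₂)
  have hNdg : Integrable (fun x ↦ ‖v x‖ ^ 2 * fderiv ℝ g x e) μ :=
    hN.mul_bdd ((hg.continuous_fderiv one_ne_zero).clm_apply continuous_const).aestronglyMeasurable
      (.of_forall hB)
  have by_parts := integral_mul_fderiv_eq_neg_fderiv_mul_of_integrable hdNg hNdg hNg
    (fun x _ ↦ (hv.differentiable one_ne_zero x).norm_sq ℝ)
    (fun x _ ↦ hg.differentiable one_ne_zero x)
  have expand (x : E) : ‖fderiv ℝ v x e + g x • v x‖ ^ 2 = ‖fderiv ℝ v x e‖ ^ 2 +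
      (fderiv ℝ (fun x ↦ ‖v x‖ ^ 2) x e * g x + ‖v x‖ ^ 2 * g x * g x) := by
    rw [norm_add_sq_real, fderiv_norm_sq_comp_apply (hv.differentiable one_ne_zero x),
      inner_smul_right, real_inner_comm, norm_smul, mul_pow, Real.norm_eq_abs, sq_abs]
    ring
  have square : 0 ≤ ∫ x, ‖fderiv ℝ v x e + g x • v x‖ ^ 2 ∂μ :=
    integral_nonneg fun x ↦ by positivity
  simp_rw [expand] at square
  rw [integral_add hdv (hdNg.fun_add hNgg), integral_add hdNg hNgg] at square
  simp_rw [mul_sub, sq (g _), ← mul_assoc]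
  refine ⟨hNdg.sub hNgg, ?_⟩
  rw [integral_sub hNdg hNgg, by_parts]
  linarith

end GroundState

section Hardy

open Module Filter Topology
open scoped InnerProductSpace

variable {E : Type*} [NormedAddCommGroup E]

lemma tendsto_ofReal_div_norm_sq_add_one_div (c : ℝ) {y : E} (hy : y ≠ 0) :
    Tendsto (fun n : ℕ ↦ ENNReal.ofReal (c / (‖y‖ ^ 2 + 1 / (n + 1)))) atTop
      (𝓝 (ENNReal.ofReal c * (‖y‖ₑ ^ 2)⁻¹)) := by
  have hy_sq : 0 < ‖y‖ ^ 2 := by positivity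
  have : ENNReal.ofReal c * (‖y‖ₑ ^ 2)⁻¹ = ENNReal.ofReal (c / (‖y‖ ^ 2 + 0)) := by
    rw [add_zero, ENNReal.ofReal_div_of_pos hy_sq, div_eq_mul_inv,
      ENNReal.ofReal_pow (norm_nonneg y), ofReal_norm]
  rw [this]
  exact ENNReal.tendsto_ofReal (tendsto_const_nhds.div
    (tendsto_const_nhds.add tendsto_one_div_add_atTop_nhds_zero_nat) (by positivity))

variable [InnerProductSpace ℝ E]

/-- The component in direction `e` of the vector field `κ (x - a) / (|x - a|² + δ)`, a bounded
regularisation of `-∇ log f` for `f x = |x - a| ^ (-κ)`. In dimension `d` and for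
`κ = (d - 2) / 2`, this `f` is the virtual ground state of `-Δ - κ² |x - a|⁻²`. -/
def hardyField (κ δ : ℝ) (a e x : E) : ℝ := κ * ⟪e, x - a⟫_ℝ / (‖x - a‖ ^ 2 + δ)

variable {κ δ : ℝ}

lemma contDiff_hardyField (κ : ℝ) (hδ : 0 < δ) (a e : E) : ContDiff ℝ 1 (hardyField κ δ a e) :=
  ContDiff.div (contDiff_const.mul (contDiff_const.inner ℝ (by fun_prop)))
    ((ContDiff.norm_sq ℝ (by fun_prop)).add contDiff_const) fun x ↦ by positivity

lemma fderiv_hardyField_apply (κ : ℝ) (hδ : 0 < δ) (a : E) {e : E} (he : ‖e‖ = 1) (x : E) :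
    fderiv ℝ (hardyField κ δ a e) x e = κ * ((‖x - a‖ ^ 2 + δ) - 2 * ⟪e, x - a⟫_ℝ ^ 2) /
      (‖x - a‖ ^ 2 + δ) ^ 2 := by
  have hD : ‖x - a‖ ^ 2 + δ ≠ 0 := by positivity
  have hsub : HasFDerivAt (fun x : E ↦ x - a) (.id ℝ E) x := (hasFDerivAt_id x).sub_const a
  have hnum := ((innerSL ℝ e).hasFDerivAt.comp x hsub).const_mul κ
  have hinv := (hasDerivAt_inv hD).comp_hasFDerivAt x (hsub.norm_sq.add_const δ)
  rw [HasFDerivAt.fderiv (f := hardyField κ δ a e) (hnum.mul hinv)]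
  simp only [coe_innerSL_apply, Function.comp_apply, ContinuousLinearMap.comp_id, neg_smul,
    smul_neg, add_apply, neg_apply, smul_apply, real_inner_comm e, nsmul_eq_mul, Nat.cast_ofNat,
    smul_eq_mul, real_inner_self_eq_norm_sq, he, one_pow, mul_one]
  field_simp
  ring

lemma sq_inner_le_sq_norm {e : E} (he : ‖e‖ = 1) (y : E) : ⟪e, y⟫_ℝ ^ 2 ≤ ‖y‖ ^ 2 := by
  simpa [he] using sq_le_sq.2 ((abs_real_inner_le_norm e y).trans (le_abs_self _))

lemma norm_hardyField_le (κ : ℝ) (hδ : 0 < δ) (a : E) {e : E} (he : ‖e‖ = 1) (x : E) :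
    ‖hardyField κ δ a e x‖ ≤ |κ| * (1 + δ⁻¹) := by
  have : ‖x - a‖ ≤ (1 + δ⁻¹) * (‖x - a‖ ^ 2 + δ) := by
    have : δ⁻¹ * δ = 1 := inv_mul_cancel₀ hδ.ne'
    have : 0 ≤ δ⁻¹ * ‖x - a‖ ^ 2 := by positivity
    nlinarith [sq_nonneg (‖x - a‖ - 1)]
  calc ‖hardyField κ δ a e x‖ = |κ| * |⟪e, x - a⟫_ℝ| / (‖x - a‖ ^ 2 + δ) := by
        rw [hardyField, Real.norm_eq_abs, abs_div, abs_mul, abs_of_pos (a := _ + _) (by positivity)]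
    _ ≤ |κ| * ((1 + δ⁻¹) * (‖x - a‖ ^ 2 + δ)) / (‖x - a‖ ^ 2 + δ) := by
        gcongr
        exact (abs_real_inner_le_norm e _).trans (by rwa [he, one_mul])
    _ = |κ| * (1 + δ⁻¹) := by field_simp

lemma norm_fderiv_hardyField_apply_le (κ : ℝ) (hδ : 0 < δ) (a : E) {e : E} (he : ‖e‖ = 1) (x : E) :
    ‖fderiv ℝ (hardyField κ δ a e) x e‖ ≤ |κ| * δ⁻¹ := by
  have : 0 < ‖x - a‖ ^ 2 + δ := by positivity
  have : |‖x - a‖ ^ 2 + δ - 2 * ⟪e, x - a⟫_ℝ ^ 2| ≤ ‖x - a‖ ^ 2 + δ := by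
    have := sq_inner_le_sq_norm he (x - a)
    exact abs_le.2 ⟨by linarith, by linarith [sq_nonneg ⟪e, x - a⟫_ℝ]⟩
  calc ‖fderiv ℝ (hardyField κ δ a e) x e‖
      = |κ| * |‖x - a‖ ^ 2 + δ - 2 * ⟪e, x - a⟫_ℝ ^ 2| / (‖x - a‖ ^ 2 + δ) ^ 2 := by
        rw [fderiv_hardyField_apply κ hδ a he, Real.norm_eq_abs, abs_div, abs_mul, abs_sq]
    _ ≤ |κ| * (‖x - a‖ ^ 2 + δ) / (‖x - a‖ ^ 2 + δ) ^ 2 := by gcongr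
    _ = |κ| * (‖x - a‖ ^ 2 + δ)⁻¹ := by field_simp
    _ ≤ |κ| * δ⁻¹ := by gcongr; exact le_add_of_nonneg_left (by positivity)

variable {ι : Type*} [Fintype ι]

lemma div_le_sum_fderiv_hardyField_sub_sq (hκ : 0 ≤ κ) (hδ : 0 < δ)
    (b : OrthonormalBasis ι ℝ E) (a x : E) :
    κ * (finrank ℝ E - 2 - κ) / (‖x - a‖ ^ 2 + δ) ≤
      ∑ i, (fderiv ℝ (hardyField κ δ a (b i)) x (b i) - hardyField κ δ a (b i) x ^ 2) := by
  set D := ‖x - a‖ ^ 2 + δ with hD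
  have hD_pos : 0 < D := by positivity
  have summand (i : ι) : fderiv ℝ (hardyField κ δ a (b i)) x (b i) - hardyField κ δ a (b i) x ^ 2 =
      κ / D - (κ * (2 + κ) / D ^ 2) * ⟪b i, x - a⟫_ℝ ^ 2 := by
    rw [fderiv_hardyField_apply κ hδ a (b.norm_eq_one i), hardyField, ← hD]
    field_simp
    ring
  calc κ * (finrank ℝ E - 2 - κ) / D
      = finrank ℝ E * (κ / D) - (κ * (2 + κ) / D ^ 2) * D := by field_simp; ring
    _ ≤ finrank ℝ E * (κ / D) - (κ * (2 + κ) / D ^ 2) * ‖x - a‖ ^ 2 := by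
        gcongr
        exact le_add_of_nonneg_right hδ.le
    _ = _ := by
        simp_rw [summand]
        rw [Finset.sum_sub_distrib, ← Finset.mul_sum, b.sum_sq_inner_right, Finset.sum_const,
          Finset.card_univ, nsmul_eq_mul, finrank_eq_card_basis b.toBasis]

variable [MeasurableSpace E] [BorelSpace E] [FiniteDimensional ℝ E] {F : Type*}
  [NormedAddCommGroup F] [InnerProductSpace ℝ F]

lemma lintegral_div_mul_enorm_sq_le_of_contDiff {v : E → F} (hκ : 0 ≤ κ)
    (hκ' : κ ≤ finrank ℝ E - 2) (hδ : 0 < δ)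
    (b : OrthonormalBasis ι ℝ E) (a : E) (hv : ContDiff ℝ 1 v) (hv₂ : MemLp v 2 volume)
    (hdv₂ : ∀ i, MemLp (fun x ↦ fderiv ℝ v x (b i)) 2 volume) :
    ∫⁻ x, ENNReal.ofReal (κ * (finrank ℝ E - 2 - κ) / (‖x - a‖ ^ 2 + δ)) * ‖v x‖ₑ ^ 2 ≤
      ∑ i, ∫⁻ x, ‖fderiv ℝ v x (b i)‖ₑ ^ 2 := by
  have directional (i : ι) := integral_norm_sq_mul_fderiv_sub_sq_le hv hv₂ (hdv₂ i)
    (contDiff_hardyField κ hδ a (b i)) (norm_hardyField_le κ hδ a (b.norm_eq_one i))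
    (norm_fderiv_hardyField_apply_le κ hδ a (b.norm_eq_one i))
  have hint (i : ι) := (directional i).1
  have pointwise (x : E) : ‖v x‖ ^ 2 * (κ * (finrank ℝ E - 2 - κ) / (‖x - a‖ ^ 2 + δ)) ≤
      ∑ i, ‖v x‖ ^ 2 * (fderiv ℝ (hardyField κ δ a (b i)) x (b i) -
        hardyField κ δ a (b i) x ^ 2) := by
    rw [← Finset.mul_sum]
    gcongr
    exact div_le_sum_fderiv_hardyField_sub_sq hκ hδ b a x
  have : 0 ≤ finrank ℝ E - 2 - κ := by linarith
  calc ∫⁻ x, ENNReal.ofReal (κ * (finrank ℝ E - 2 - κ) / (‖x - a‖ ^ 2 + δ)) * ‖v x‖ₑ ^ 2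
      = ∫⁻ x, ENNReal.ofReal
          (‖v x‖ ^ 2 * (κ * (finrank ℝ E - 2 - κ) / (‖x - a‖ ^ 2 + δ))) := by
        refine lintegral_congr fun x ↦ ?_
        rw [ENNReal.ofReal_mul (by positivity), ENNReal.ofReal_pow (norm_nonneg _), ofReal_norm,
          mul_comm]
    _ ≤ ∫⁻ x, ENNReal.ofReal (∑ i, ‖v x‖ ^ 2 *
          (fderiv ℝ (hardyField κ δ a (b i)) x (b i) - hardyField κ δ a (b i) x ^ 2)) := by
        gcongr with x
        exact pointwise x
    _ = ENNReal.ofReal (∑ i, ∫ x, ‖v x‖ ^ 2 *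
          (fderiv ℝ (hardyField κ δ a (b i)) x (b i) - hardyField κ δ a (b i) x ^ 2)) := by
        rw [← integral_finsetSum _ fun i _ ↦ hint i, ofReal_integral_eq_lintegral_ofReal
          (integrable_finsetSum _ fun i _ ↦ hint i)
          (.of_forall fun x ↦ (by positivity : (0 : ℝ) ≤ _).trans (pointwise x))]
    _ ≤ ENNReal.ofReal (∑ i, ∫ x, ‖fderiv ℝ v x (b i)‖ ^ 2) := by
        exact ENNReal.ofReal_le_ofReal (Finset.sum_le_sum fun i _ ↦ (directional i).2)
    _ = ∑ i, ∫⁻ x, ‖fderiv ℝ v x (b i)‖ₑ ^ 2 := by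
        rw [ENNReal.ofReal_sum_of_nonneg fun i _ ↦ integral_nonneg fun x ↦ sq_nonneg _]
        simp_rw [ofReal_integral_norm_sq (hdv₂ _)]

lemma lintegral_inv_enorm_sq_mul_enorm_sq_le [CompleteSpace F] (hd : 2 ≤ finrank ℝ E)
    (b : OrthonormalBasis ι ℝ E) (a : E) {u : E → F} {u' : ι → E → F} (hu : MemLp u 2 volume)
    (hu' : ∀ i, MemLp (u' i) 2 volume) (huu' : ∀ i, HasWeakLineDeriv volume u (u' i) (b i)) :
    ENNReal.ofReal (((finrank ℝ E - 2) / 2) ^ 2) * ∫⁻ x, (‖x - a‖ₑ ^ 2)⁻¹ * ‖u x‖ₑ ^ 2 ≤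
      ∑ i, ∫⁻ x, ‖u' i x‖ₑ ^ 2 := by
  set κ : ℝ := (finrank ℝ E - 2) / 2
  have hκ : 0 ≤ κ := div_nonneg (sub_nonneg.2 (mod_cast hd)) zero_le_two
  have hdκ : (finrank ℝ E : ℝ) - 2 = 2 * κ := by ring
  have hκ_sq : κ * (finrank ℝ E - 2 - κ) = κ ^ 2 := by ring
  have : Nontrivial E := Module.nontrivial_of_finrank_pos (R := ℝ) (by lia)
  obtain ⟨w, hw, hw₂, hdw₂, hdw_le, hlim⟩ := exists_seq_contDiff_of_hasWeakLineDeriv hu hu' huu'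
  have regularised (n : ℕ) :
      ∫⁻ x, ENNReal.ofReal (κ ^ 2 / (‖x - a‖ ^ 2 + 1 / (n + 1))) * ‖w n x‖ₑ ^ 2 ≤
        ∑ i, ∫⁻ x, ‖u' i x‖ₑ ^ 2 := by
    refine le_trans ?_ (Finset.sum_le_sum fun i _ ↦ hdw_le n i)
    simpa only [hκ_sq] using lintegral_div_mul_enorm_sq_le_of_contDiff hκ (by linarith)
      Nat.one_div_pos_of_nat b a (hw n) (hw₂ n) (hdw₂ n)
  rw [← lintegral_const_mul' _ _ ENNReal.ofReal_ne_top]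
  refine lintegral_le_of_ae_tendsto (fun n ↦ ?_) ?_ regularised
  · have := (hw n).continuous
    fun_prop
  · filter_upwards [hlim, Measure.ae_ne volume a] with x hx hxa
    have hxa' : x - a ≠ 0 := sub_ne_zero.2 hxa
    rw [← mul_assoc]
    exact ENNReal.Tendsto.mul (tendsto_ofReal_div_norm_sq_add_one_div (κ ^ 2) hxa')
      (.inr (by finiteness)) (ENNReal.Tendsto.pow hx.enorm)
      (.inr (ENNReal.mul_ne_top ENNReal.ofReal_ne_top (by simpa using hxa')))

end Hardy

section FormBounds

open Module

variable {ι E F : Type*} [Fintype ι] [NormedAddCommGroup E] [InnerProductSpace ℝ E]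
  [FiniteDimensional ℝ E] [MeasurableSpace E] [BorelSpace E] [NormedAddCommGroup F]
  [InnerProductSpace ℝ F] [CompleteSpace F]

lemma lintegral_rieszPotential_two_mul_enorm_sq_le (hd : 2 ≤ finrank ℝ E)
    (b : OrthonormalBasis ι ℝ E) (μ : Measure E) [SFinite μ] {u : E → F} {u' : ι → E → F}
    (hu : MemLp u 2 volume) (hu' : ∀ i, MemLp (u' i) 2 volume)
    (huu' : ∀ i, HasWeakLineDeriv volume u (u' i) (b i)) :
    ENNReal.ofReal (((finrank ℝ E - 2) / 2) ^ 2) *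
        ∫⁻ x, rieszPotential 2 μ x * ‖u x‖ₑ ^ 2 ≤
      μ Set.univ * ∑ i, ∫⁻ x, ‖u' i x‖ₑ ^ 2 := by
  have hu_meas : AEMeasurable (fun p : E × E ↦ ‖u p.1‖ₑ ^ 2) (volume.prod μ) :=
    (hu.1.enorm.pow_const 2).comp_fst
  have tonelli : ∫⁻ x, rieszPotential 2 μ x * ‖u x‖ₑ ^ 2 =
      ∫⁻ y, (∫⁻ x, (‖x - y‖ₑ ^ 2)⁻¹ * ‖u x‖ₑ ^ 2) ∂μ := by
    rw [← lintegral_lintegral_swap (.mul (f := fun p : E × E ↦ (‖p.1 - p.2‖ₑ ^ 2)⁻¹)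
      (by fun_prop) hu_meas)]
    refine lintegral_congr fun x ↦ ?_
    rw [lintegral_mul_const _ (by fun_prop), rieszPotential]
  rw [tonelli, ← lintegral_const_mul' _ _ ENNReal.ofReal_ne_top, mul_comm (μ Set.univ),
    ← lintegral_const]
  exact lintegral_mono fun y ↦ lintegral_inv_enorm_sq_mul_enorm_sq_le hd b y hu hu' huu'

lemma exists_lintegral_sq_rieszPotential_mul_enorm_sq_le {α β : ℕ} (hα : α < finrank ℝ E)
    (hβ : β < finrank ℝ E) (h : α + β = finrank ℝ E + 1) (b : OrthonormalBasis ι ℝ E) :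
    ∃ A : ℝ≥0, ∀ (μ : Measure E) [SFinite μ] (u : E → F) (u' : ι → E → F),
      MemLp u 2 volume → (∀ i, MemLp (u' i) 2 volume) →
      (∀ i, HasWeakLineDeriv volume u (u' i) (b i)) →
      ∫⁻ x, rieszPotential α (volume.withDensity (rieszPotential β μ)) x ^ 2 * ‖u x‖ₑ ^ 2 ≤
        A * μ Set.univ ^ 2 * ∑ i, ∫⁻ x, ‖u' i x‖ₑ ^ 2 := by
  obtain ⟨A, hA⟩ :=
    exists_sq_rieszPotential_withDensity_rieszPotential_le volume hα hβ h one_ne_zero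
  have hd : (3 : ℝ) ≤ finrank ℝ E := by norm_cast; lia
  have hκ : 0 < (((finrank ℝ E - 2) / 2) ^ 2 : ℝ) := by
    have : (0 : ℝ) < finrank ℝ E - 2 := by linarith
    positivity
  set κ : ℝ≥0 := (((finrank ℝ E - 2) / 2) ^ 2 : ℝ).toNNReal
  have hκ₀ : (κ : ℝ≥0∞) ≠ 0 := (ENNReal.ofReal_pos.2 hκ).ne'
  refine ⟨A * κ⁻¹, fun μ _ u u' hu hu' huu' ↦ ?_⟩
  have hardy : ∫⁻ x, rieszPotential 2 μ x * ‖u x‖ₑ ^ 2 ≤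
      (κ : ℝ≥0∞)⁻¹ * (μ Set.univ * ∑ i, ∫⁻ x, ‖u' i x‖ₑ ^ 2) := by
    rw [mul_comm, ← div_eq_mul_inv, ENNReal.le_div_iff_mul_le (.inl hκ₀) (.inl (by finiteness)),
      mul_comm]
    exact lintegral_rieszPotential_two_mul_enorm_sq_le (by lia) b μ hu hu' huu'
  calc ∫⁻ x, rieszPotential α (volume.withDensity (rieszPotential β μ)) x ^ 2 * ‖u x‖ₑ ^ 2
      ≤ ∫⁻ x, A * μ Set.univ * (rieszPotential 2 μ x * ‖u x‖ₑ ^ 2) := by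
        refine lintegral_mono fun x ↦ ?_
        rw [← mul_assoc]
        gcongr
        exact hA μ x
    _ = A * μ Set.univ * ∫⁻ x, rieszPotential 2 μ x * ‖u x‖ₑ ^ 2 :=
        lintegral_const_mul'' _ ((measurable_rieszPotential 2 μ).aemeasurable.mul
          (hu.1.enorm.pow_const 2))
    _ ≤ A * μ Set.univ * ((κ : ℝ≥0∞)⁻¹ * (μ Set.univ * ∑ i, ∫⁻ x, ‖u' i x‖ₑ ^ 2)) := by
        gcongr
    _ = ↑(A * κ⁻¹) * μ Set.univ ^ 2 * ∑ i, ∫⁻ x, ‖u' i x‖ₑ ^ 2 := by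
        rw [ENNReal.coe_mul, ENNReal.coe_inv (mod_cast hκ₀)]
        ring

end FormBounds

section PolarizationPotential

lemma inv_ofReal_mul_norm_sq_le {E : Type*} [NormedAddCommGroup E] {c : ℝ} (hc : 1 ≤ c) (x : E) :
    (ENNReal.ofReal (c * ‖x‖ ^ 2))⁻¹ ≤ (‖x‖ₑ ^ 2)⁻¹ := by
  rw [ENNReal.inv_le_inv, ← ofReal_norm, ← ENNReal.ofReal_pow (norm_nonneg x)]
  exact ENNReal.ofReal_le_ofReal (le_mul_of_one_le_left (sq_nonneg _) hc)

lemma polarizationPotential_le_rieszPotential {E : Type*} [NormedAddCommGroup E]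
    [NormedSpace ℝ E] [FiniteDimensional ℝ E] [MeasurableSpace E] [BorelSpace E] {ν μ : Measure E}
    [SFinite μ] {Φ W : E → ℝ≥0∞}
    (hΦ : ∀ z, Φ z = ∫⁻ y, (ENNReal.ofReal (2 * π ^ 2 * ‖z - y‖ ^ 2))⁻¹ ∂μ)
    (hW : ∀ x, W x = ∫⁻ y, Φ y / ENNReal.ofReal (π ^ 2 * ‖x - y‖ ^ 2) ∂ν) (x : E) :
    W x ≤ rieszPotential 2 (ν.withDensity (rieszPotential 2 μ)) x := by
  have one_le_pi_sq : 1 ≤ π ^ 2 := one_le_pow₀ (by linarith [pi_gt_three])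
  have hΦ_le (z : E) : Φ z ≤ rieszPotential 2 μ z :=
    (hΦ z).trans_le (lintegral_mono fun y ↦ inv_ofReal_mul_norm_sq_le (by linarith) (z - y))
  rw [hW, rieszPotential, lintegral_withDensity_eq_lintegral_mul _ (measurable_rieszPotential 2 μ)
    (by fun_prop)]
  exact lintegral_mono fun y ↦
    mul_le_mul' (hΦ_le y) (inv_ofReal_mul_norm_sq_le one_le_pi_sq (x - y))

variable {F : Type*} [NormedAddCommGroup F]

lemma ofReal_integral_sum_norm_sq {α ι : Type*} [Fintype ι] {mα : MeasurableSpace α}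
    {μ : Measure α} {f : ι → α → F} (hf : ∀ i, MemLp (f i) 2 μ) :
    ENNReal.ofReal (∫ x, ∑ i, ‖f i x‖ ^ 2 ∂μ) = ∑ i, ∫⁻ x, ‖f i x‖ₑ ^ 2 ∂μ := by
  rw [integral_finsetSum _ fun i _ ↦ (hf i).integrable_norm_pow two_ne_zero,
    ENNReal.ofReal_sum_of_nonneg fun i _ ↦ integral_nonneg fun x ↦ sq_nonneg _]
  simp_rw [ofReal_integral_norm_sq (hf _)]

lemma hasWeakLineDeriv_iff_integral_mul_ofReal {E : Type*} [NormedAddCommGroup E]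
    [NormedSpace ℝ E] [MeasurableSpace E] {μ : Measure E} {u u' : E → ℂ} {v : E} :
    HasWeakLineDeriv μ u u' v ↔ ∀ φ : E → ℝ, ContDiff ℝ (⊤ : ℕ∞) φ → HasCompactSupport φ →
      ∫ x, u x * (fderiv ℝ φ x v : ℂ) ∂μ = - ∫ x, u' x * (φ x : ℂ) ∂μ := by
  simp only [HasWeakLineDeriv, Complex.real_smul, mul_comm]

theorem statement6_general [InnerProductSpace ℝ F] [CompleteSpace F]
    (μ : Measure (EuclideanSpace ℝ (Fin 3))) [IsFiniteMeasure μ]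
    (Φ : EuclideanSpace ℝ (Fin 3) → ℝ≥0∞)
    (hΦ : ∀ z, Φ z = ∫⁻ y, (ENNReal.ofReal (2 * π ^ 2 * ‖z - y‖ ^ 2))⁻¹ ∂μ)
    (W : EuclideanSpace ℝ (Fin 3) → ℝ≥0∞)
    (hW : ∀ x, W x = ∫⁻ y, Φ y / ENNReal.ofReal (π ^ 2 * ‖x - y‖ ^ 2))
    {ε : ℝ} (hε : 0 < ε) :
    ∃ C > 0, ∀ (u : EuclideanSpace ℝ (Fin 3) → F) (u' : Fin 3 → EuclideanSpace ℝ (Fin 3) → F),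
      MemLp u 2 volume → (∀ i, MemLp (u' i) 2 volume) →
      (∀ i, HasWeakLineDeriv volume u (u' i) (EuclideanSpace.single i 1)) →
      (∫⁻ x, W x ^ 2 * ‖u x‖ₑ ^ 2 ≤ ENNReal.ofReal (C * ∫ x, ∑ i, ‖u' i x‖ ^ 2)) ∧
      (∫⁻ x, W x * ‖u x‖ₑ ^ 2 ≤
        ENNReal.ofReal (ε * (∫ x, ∑ i, ‖u' i x‖ ^ 2) + C * ∫ x, ‖u x‖ ^ 2)) := by
  obtain ⟨A, hA⟩ := exists_lintegral_sq_rieszPotential_mul_enorm_sq_le (F := F) (α := 2) (β := 2)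
    (by simp) (by simp) (by simp) (EuclideanSpace.basisFun (Fin 3) ℝ)
  lift ε to ℝ≥0 using hε.le
  have hε₀ : ε ≠ 0 := (NNReal.coe_pos.1 hε).ne'
  set M : ℝ≥0 := A * (μ Set.univ).toNNReal ^ 2 + 1
  have hM : M ≠ 0 := by positivity
  refine ⟨M + M / ε, by positivity, fun u u' hu hu' huu' ↦ ?_⟩
  rw [← NNReal.coe_div, ← NNReal.coe_add, ENNReal.ofReal_add (by positivity) (by positivity),
    ENNReal.ofReal_mul NNReal.zero_le_coe, ENNReal.ofReal_mul NNReal.zero_le_coe,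
    ENNReal.ofReal_mul NNReal.zero_le_coe, ofReal_integral_sum_norm_sq hu',
    ofReal_integral_norm_sq hu, ENNReal.ofReal_coe_nnreal, ENNReal.ofReal_coe_nnreal]
  have form_sq_le : ∫⁻ x, W x ^ 2 * ‖u x‖ₑ ^ 2 ≤ M * ∑ i, ∫⁻ x, ‖u' i x‖ₑ ^ 2 := calc
    _ ≤ ∫⁻ x, rieszPotential 2 (volume.withDensity (rieszPotential 2 μ)) x ^ 2 * ‖u x‖ₑ ^ 2 := by
        gcongr with x
        exact polarizationPotential_le_rieszPotential hΦ hW x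
    _ ≤ A * μ Set.univ ^ 2 * ∑ i, ∫⁻ x, ‖u' i x‖ₑ ^ 2 :=
        hA μ u u' hu hu' (by simpa only [EuclideanSpace.basisFun_apply] using huu')
    _ ≤ M * ∑ i, ∫⁻ x, ‖u' i x‖ₑ ^ 2 := by
        gcongr
        simp [M]
  refine ⟨form_sq_le.trans (by gcongr; exact le_self_add), ?_⟩
  calc ∫⁻ x, W x * ‖u x‖ₑ ^ 2
      ≤ ↑(ε / M) * (∫⁻ x, W x ^ 2 * ‖u x‖ₑ ^ 2) + (↑(ε / M) : ℝ≥0∞)⁻¹ * ∫⁻ x, ‖u x‖ₑ ^ 2 :=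
        lintegral_mul_le_mul_lintegral_sq_mul_add (hu.1.enorm.pow_const 2) W (ε / M)
    _ ≤ ↑(ε / M) * (M * ∑ i, ∫⁻ x, ‖u' i x‖ₑ ^ 2) + ↑(M / ε) * ∫⁻ x, ‖u x‖ₑ ^ 2 := by
        rw [← ENNReal.coe_inv (div_ne_zero hε₀ hM), inv_div]
        gcongr
    _ = ε * (∑ i, ∫⁻ x, ‖u' i x‖ₑ ^ 2) + ↑(M / ε) * ∫⁻ x, ‖u x‖ₑ ^ 2 := by
        rw [← mul_assoc, ← ENNReal.coe_mul, div_mul_cancel₀ _ hM]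
    _ ≤ ε * (∑ i, ∫⁻ x, ‖u' i x‖ₑ ^ 2) + ↑(M + M / ε) * ∫⁻ x, ‖u x‖ₑ ^ 2 := by
        gcongr
        exact le_add_self

end PolarizationPotential

/-- Let `ψ ∈ L²(ℝ³;ℝ)` be normalized, let
`φ(z) = ∫ ψ(y)²/(2π²|z−y|²) dy` and let `W = −V^φ ≥ 0` be (minus) the polarization
potential, `W(x) = ∫ φ(y)/(π²|x−y|²) dy` (iterated integrals of nonnegative functions,
with values in `[0,∞]`). Then there is `C > 0` such that for every `u ∈ H¹(ℝ³;ℂ)`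
(with weak partial derivatives `u'`):
(i) `∫ V^φ(x)²|u(x)|² dx ≤ C(‖∇u‖² + ‖u‖²)`, and
(ii) `|∫ V^φ(x)|u(x)|² dx| = ∫ W(x)|u(x)|² dx ≤ (1/2)‖∇u‖² + C‖u‖²`. -/
theorem statement6
    (ψ : EuclideanSpace ℝ (Fin 3) → ℝ)
    (hψ : MemLp ψ 2 volume)
    (hnorm : ∫ x, ψ x ^ 2 = 1)
    (Φ : EuclideanSpace ℝ (Fin 3) → ℝ≥0∞)
    (hΦ : ∀ z, Φ z = ∫⁻ y, ENNReal.ofReal (ψ y ^ 2) /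
      ENNReal.ofReal (2 * π ^ 2 * ‖z - y‖ ^ 2))
    (W : EuclideanSpace ℝ (Fin 3) → ℝ≥0∞)
    (hW : ∀ x, W x = ∫⁻ y, Φ y / ENNReal.ofReal (π ^ 2 * ‖x - y‖ ^ 2)) :
    ∃ C > 0, ∀ (u : EuclideanSpace ℝ (Fin 3) → ℂ)
      (u' : Fin 3 → EuclideanSpace ℝ (Fin 3) → ℂ),
      MemLp u 2 volume → (∀ i, MemLp (u' i) 2 volume) →
      (∀ i, ∀ φ : EuclideanSpace ℝ (Fin 3) → ℝ,
        ContDiff ℝ (⊤ : ℕ∞) φ → HasCompactSupport φ →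
        ∫ x, u x * (fderiv ℝ φ x (EuclideanSpace.single i 1) : ℂ) =
          - ∫ x, u' i x * (φ x : ℂ)) →
      (∫⁻ x, W x ^ 2 * (‖u x‖₊ : ℝ≥0∞) ^ 2 ≤
        ENNReal.ofReal (C * ((∫ x, ∑ i, ‖u' i x‖ ^ 2) + ∫ x, ‖u x‖ ^ 2))) ∧
      (∫⁻ x, W x * (‖u x‖₊ : ℝ≥0∞) ^ 2 ≤
        ENNReal.ofReal ((1 / 2) * (∫ x, ∑ i, ‖u' i x‖ ^ 2) + C * ∫ x, ‖u x‖ ^ 2)) := by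
  have := isFiniteMeasure_withDensity_ofReal hψ.integrable_sq.2
  have hρ : AEMeasurable fun y ↦ ENNReal.ofReal (ψ y ^ 2) :=
    (hψ.aestronglyMeasurable.aemeasurable.pow_const 2).ennreal_ofReal
  have hΦ' (z : EuclideanSpace ℝ (Fin 3)) :
      Φ z = ∫⁻ y, (ENNReal.ofReal (2 * π ^ 2 * ‖z - y‖ ^ 2))⁻¹
        ∂volume.withDensity fun y ↦ ENNReal.ofReal (ψ y ^ 2) := by
    rw [hΦ, lintegral_withDensity_eq_lintegral_mul₀ hρ (by fun_prop)]
    rfl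
  obtain ⟨C, hC, hbound⟩ := statement6_general (F := ℂ) _ Φ hΦ' W hW one_half_pos
  refine ⟨C, hC, fun u u' hu hu' huu' ↦ ?_⟩
  obtain ⟨form_sq_le, form_le⟩ :=
    hbound u u' hu hu' fun i ↦ hasWeakLineDeriv_iff_integral_mul_ofReal.2 (huu' i)
  refine ⟨form_sq_le.trans (ENNReal.ofReal_le_ofReal ?_), form_le⟩
  gcongr
  exact le_add_of_nonneg_right (by positivity)
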